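/- For any sequence k = k(n) of natural numbers with k(n) → ∞ as n → ∞, the pair sum over single-gap pairs sharing many edges vanishes: Σ_{s=k(n)}^{n−2} c_{s,1} → 0 as n → ∞. -/

import Mathlib

open MeasureTheory Filter

namespace RandomHypercube

/-- Index of a (potential) hypercube edge: the lower endpoint `A` together with the
direction `i` that is added, representing the edge from `A` to `A ∪ {i}`. -/
abbrev EdgeIdx (n : ℕ) := Finset (Fin n) × Fin n

/-- The sample space: an i.i.d. Uniform[0,1] weight for each edge index. -/
abbrev CubeOmega (n : ℕ) := EdgeIdx n → ℝ

/-- The product of uniform measures on [0,1], one for each edge. -/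
noncomputable def cubeMeasure (n : ℕ) : Measure (CubeOmega n) :=
  Measure.pi fun _ => (volume : Measure ℝ).restrict (Set.Icc 0 1)

/-- The vertex visited by the direct path associated to the permutation `σ`
just before taking its `j`-th step: the image under `σ` of `{0, …, j-1}`. -/
def initSeg (n : ℕ) (σ : Equiv.Perm (Fin n)) (j : Fin n) : Finset (Fin n) :=
  (Finset.univ.filter fun i => i < j).image σ

/-- The edge used in the `j`-th step of the direct path associated to `σ`. -/
def pathEdge (n : ℕ) (σ : Equiv.Perm (Fin n)) (j : Fin n) : EdgeIdx n :=
  (initSeg n σ j, σ j)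

/-- The direct path associated to `σ` is accessible if its successive edge
weights are strictly increasing. -/
def Accessible (n : ℕ) (σ : Equiv.Perm (Fin n)) (ω : CubeOmega n) : Prop :=
  StrictMono fun j : Fin n => ω (pathEdge n σ j)

/-- The number of accessible direct paths from `∅` to `[n]`. -/
noncomputable def X (n : ℕ) (ω : CubeOmega n) : ℕ :=
  Nat.card {σ : Equiv.Perm (Fin n) // Accessible n σ ω}


/-- The set of steps `j` at which the direct paths of `σ` and `σ'` use the same edge
(shared edges necessarily occur at the same level in both paths). -/
def sharedSteps (n : ℕ) (σ σ' : Equiv.Perm (Fin n)) : Finset (Fin n) :=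
  Finset.univ.filter fun j => pathEdge n σ j = pathEdge n σ' j

/-- Given the sorted list `l` of steps (levels) of the shared edges, the gap vector:
the number of edges before the first shared edge, strictly between consecutive shared
edges, and after the last shared edge. -/
def gapsOfList (n : ℕ) (l : List ℕ) : List ℕ :=
  List.zipWith (fun a b => b - a) (0 :: l.map (· + 1)) (l ++ [n])

/-- The gap vector of the direct path of `σ'` relative to that of `σ`. -/
def gapVector (n : ℕ) (σ σ' : Equiv.Perm (Fin n)) : List ℕ :=
  gapsOfList n (((sharedSteps n σ σ').sort (· ≤ ·)).map Fin.val)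

/-- The number of (nontrivial) gaps between the direct paths of `σ` and `σ'`:
the number of nonzero entries of the gap vector. -/
def numGaps (n : ℕ) (σ σ' : Equiv.Perm (Fin n)) : ℕ :=
  ((gapVector n σ σ').filter (· != 0)).length

/-- The probability that the direct paths of `σ` and `σ'` are both accessible. -/
noncomputable def pairProb (n : ℕ) (σ σ' : Equiv.Perm (Fin n)) : ℝ :=
  (cubeMeasure n {ω | Accessible n σ ω ∧ Accessible n σ' ω}).toReal

/-- `c n s g`: the sum, over all ordered pairs of direct paths sharing exactly `s`
edges with `g` gaps, of the probability that both paths are accessible. -/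
noncomputable def c (n s g : ℕ) : ℝ :=
  ∑ p ∈ Finset.univ.filter
      (fun p : Equiv.Perm (Fin n) × Equiv.Perm (Fin n) =>
        (sharedSteps n p.1 p.2).card = s ∧ numGaps n p.1 p.2 = g),
    pairProb n p.1 p.2

/-- `w m`: the number of direct paths from `∅` to `[m]` in the `m`-dimensional hypercube
that are edge-disjoint from the canonical path (the identity permutation). -/
noncomputable def w (m : ℕ) : ℕ :=
  Nat.card {σ : Equiv.Perm (Fin m) // sharedSteps m σ 1 = ∅}

end RandomHypercube


namespace RandomHypercube

lemma gaps_zero (n : ℕ) (l : List ℕ) : ∀ t, (∀ x ∈ l, t ≤ x) → l.Pairwise (· < ·) →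
    ((List.zipWith (fun a b => b - a) (t :: l.map (· + 1)) (l ++ [n])).filter (· != 0)).length = 0 →
    ∀ y, t ≤ y → y < n → y ∈ l := by
  induction l with
  | nil =>
    intro t _ _ h y hy hn
    simp at h; omega
  | cons x l ih =>
    intro t ht hp h y hy hn
    simp only [List.map_cons, List.cons_append, List.zipWith_cons_cons] at h
    rw [List.pairwise_cons] at hp
    by_cases hx : x - t = 0
    · rw [hx] at h
      have := ih (x+1) (fun z hz => hp.1 z hz) hp.2 (by simpa using h) y
      have h3 := ht x (by simp)
      simp only [List.mem_cons]
      by_cases hyx : y = x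
      · exact Or.inl hyx
      · right; apply this <;> omega
    · rw [List.filter_cons_of_pos (by simpa using hx)] at h
      simp at h

lemma gaps_one (n : ℕ) (l : List ℕ) : ∀ t, t ≤ n → (∀ x ∈ l, t ≤ x ∧ x < n) → l.Pairwise (· < ·) →
    ((List.zipWith (fun a b => b - a) (t :: l.map (· + 1)) (l ++ [n])).filter (· != 0)).length ≤ 1 →
    ∃ a b, t ≤ a ∧ a ≤ b ∧ b ≤ n ∧ ∀ y, t ≤ y → y < n → (y ∈ l ↔ y < a ∨ b ≤ y) := by
  induction l with
  | nil =>
    intro t ht _ _ h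
    refine ⟨t, n, le_rfl, ht, le_rfl, fun y h1 h2 => ?_⟩
    simp; omega
  | cons x l ih =>
    intro t ht hl hp h
    simp only [List.map_cons, List.cons_append, List.zipWith_cons_cons] at h
    rw [List.pairwise_cons] at hp
    have hx1 := hl x (by simp)
    by_cases hx : x - t = 0
    · rw [hx] at h
      obtain ⟨a, b, h1, h2, h3, h4⟩ := ih (x+1) (by omega)
        (fun z hz => ⟨hp.1 z hz, (hl z (by simp [hz])).2⟩) hp.2 (by simpa using h)
      refine ⟨a, b, by omega, h2, h3, fun y hy hn => ?_⟩
      have hxt : x = t := by omega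
      rw [List.mem_cons]
      by_cases hyx : y = x
      · simp [hyx]; omega
      · rw [h4 y (by omega) hn]; simp [hyx]
    · rw [List.filter_cons_of_pos (by simpa using hx)] at h
      have h0 := gaps_zero n l (x+1) (fun z hz => hp.1 z hz) hp.2 (by simpa using h)
      refine ⟨t, x, le_rfl, hx1.1, hx1.2.le, fun y hy hn => ?_⟩
      rw [List.mem_cons]
      constructor
      · rintro (rfl | h)
        · right; exact le_rfl
        · right; exact (hp.1 y h).le
      · rintro (h | h)
        · omega
        · rcases h.eq_or_lt with h | h
          · exact Or.inl h.symm
          · exact Or.inr (h0 y h hn)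

lemma shared_interval (n : ℕ) (σ σ' : Equiv.Perm (Fin n)) (h : numGaps n σ σ' = 1) :
    ∃ a b, a ≤ b ∧ b ≤ n ∧ ∀ j : Fin n, j ∈ sharedSteps n σ σ' ↔ (j : ℕ) < a ∨ b ≤ (j : ℕ) := by
  unfold numGaps gapVector gapsOfList at h
  obtain ⟨a, b, h1, h2, h3, h4⟩ := gaps_one n _ 0 (Nat.zero_le _) (by
      intro x hx
      simp only [List.mem_map] at hx
      obtain ⟨y, _, rfl⟩ := hx
      exact ⟨Nat.zero_le _, y.2⟩) (by
      rw [List.pairwise_map]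
      exact (Finset.sortedLT_sort _).pairwise) h.le
  refine ⟨a, b, h2, h3, fun j => ?_⟩
  rw [← h4 j (Nat.zero_le _) j.2]
  simp only [List.mem_map, Finset.mem_sort]
  constructor
  · exact fun hj => ⟨j, hj, rfl⟩
  · rintro ⟨i, hi, hij⟩
    rwa [← Fin.ext hij]

lemma pathEdge_level (n : ℕ) (σ σ' : Equiv.Perm (Fin n)) (i j : Fin n)
    (h : pathEdge n σ i = pathEdge n σ' j) : i = j := by
  have h1 := congrArg (fun e => e.1.card) h
  simp only [pathEdge, initSeg] at h1
  rw [Finset.card_image_of_injective _ σ.injective, Finset.card_image_of_injective _ σ'.injective] at h1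
  have h2 : ∀ k : Fin n, (Finset.univ.filter fun i => i < k).card = k := by
    intro k
    rw [show (Finset.univ.filter fun i => i < k) = Finset.Iio k by ext; simp, Fin.card_Iio]
  rw [h2, h2] at h1
  exact Fin.ext h1

instance (n : ℕ) : IsProbabilityMeasure (cubeMeasure n) := by
  unfold cubeMeasure
  have : IsProbabilityMeasure ((volume : Measure ℝ).restrict (Set.Icc 0 1)) := ⟨by simp⟩
  infer_instance

lemma cube_perm (n : ℕ) (τ : Equiv.Perm (EdgeIdx n)) :
    MeasurePreserving (fun ω : CubeOmega n => ω ∘ τ) (cubeMeasure n) (cubeMeasure n) := by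
  have := measurePreserving_piCongrLeft (fun _ : EdgeIdx n => (volume : Measure ℝ).restrict (Set.Icc 0 1)) τ⁻¹
  unfold cubeMeasure
  convert this using 1
  ext ω e
  have := Equiv.piCongrLeft_apply_apply (fun _ : EdgeIdx n => ℝ) τ⁻¹ ω (τ e)
  simp at this
  simp [MeasurableEquiv.piCongrLeft, this]

open scoped Classical in
lemma prob_bound (n : ℕ) {P : Type} [Fintype P] [DecidableEq P] (e : P → EdgeIdx n) (he : Function.Injective e)
    (R : Set (P → ℝ)) (hR : MeasurableSet R) (B : ℕ)
    (hB : ∀ x : P → ℝ, (Finset.univ.filter fun τ : Equiv.Perm P => x ∘ τ ∈ R).card ≤ B) :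
    ((Fintype.card P).factorial : ℝ) * (cubeMeasure n {ω | ω ∘ e ∈ R}).toReal ≤ B := by
  have key : ∀ τ : Equiv.Perm P, cubeMeasure n {ω | ω ∘ e ∘ τ ∈ R} = cubeMeasure n {ω | ω ∘ e ∈ R} := by
    intro τ
    have hm := cube_perm n (τ.viaFintypeEmbedding ⟨e, he⟩)
    have hS : MeasurableSet {ω : CubeOmega n | ω ∘ e ∈ R} := by
      apply hR.preimage (f := fun ω : CubeOmega n => ω ∘ e)
      exact measurable_pi_lambda _ fun p => measurable_pi_apply _
    rw [← hm.measure_preimage hS.nullMeasurableSet]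
    congr 1
    ext ω
    simp only [Set.mem_ofPred_eq, Set.mem_preimage]
    have : ω ∘ e ∘ τ = (ω ∘ (τ.viaFintypeEmbedding ⟨e, he⟩)) ∘ e := by
      ext p
      have := Equiv.Perm.viaFintypeEmbedding_apply_image τ ⟨e, he⟩ p
      simp only [Function.Embedding.coeFn_mk] at this
      simp [this]
    rw [this]
  have h1 : ∑ τ : Equiv.Perm P, cubeMeasure n {ω | ω ∘ e ∘ τ ∈ R} ≤ B := by
    have : ∀ τ : Equiv.Perm P, cubeMeasure n {ω | ω ∘ e ∘ τ ∈ R} =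
        ∫⁻ ω, Set.indicator {ω : CubeOmega n | ω ∘ e ∘ τ ∈ R} 1 ω ∂(cubeMeasure n) := by
      intro τ
      rw [lintegral_indicator_one]
      apply hR.preimage (f := fun ω : CubeOmega n => ω ∘ e ∘ τ)
      exact measurable_pi_lambda _ fun p => measurable_pi_apply _
    simp_rw [this]
    rw [← lintegral_finsetSum]
    · calc _ ≤ ∫⁻ ω, (B : ENNReal) ∂(cubeMeasure n) := by
            apply lintegral_mono
            intro ω
            have := hB (ω ∘ e)
            simp only [Set.indicator_apply, Set.mem_ofPred_eq, Pi.one_apply, Finset.sum_boole]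
            exact_mod_cast this
        _ = B := by simp
    · intro τ _
      apply measurable_one.indicator
      apply hR.preimage (f := fun ω : CubeOmega n => ω ∘ e ∘ τ)
      exact measurable_pi_lambda _ fun p => measurable_pi_apply _
  simp_rw [key] at h1
  rw [Finset.sum_const, Finset.card_univ, Fintype.card_perm, nsmul_eq_mul] at h1
  have := ENNReal.toReal_mono (by simp) h1
  simpa using this

lemma exists_rank {P : Type} [Fintype P] (x : P → ℝ) :
    ∃ r : P ≃ Fin (Fintype.card P), ∀ p q, x p < x q → r p < r q := by
  let g := Fintype.equivFin P
  let y : Fin (Fintype.card P) → ℝ := x ∘ g.symm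
  refine ⟨g.trans (Tuple.sort y).symm, fun p q h => ?_⟩
  by_contra! hc
  have := Tuple.monotone_sort y hc
  simp [y] at this
  exact absurd h (not_lt.mpr this)

end RandomHypercube
namespace RandomHypercube

abbrev Pos {n : ℕ} (S : Finset (Fin n)) := Fin n ⊕ {j : Fin n // j ∉ S}

def chain2 {n : ℕ} (S : Finset (Fin n)) (j : Fin n) : Pos S :=
  if h : j ∈ S then Sum.inl j else Sum.inr ⟨j, h⟩

lemma card_compl {n : ℕ} (S : Finset (Fin n)) (a b : ℕ) (hab : a ≤ b) (hb : b ≤ n)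
    (hS : ∀ j : Fin n, j ∈ S ↔ (j : ℕ) < a ∨ b ≤ (j : ℕ)) :
    Fintype.card {j : Fin n // j ∉ S} = b - a := by
  have : Fintype.card {j : Fin n // j ∉ S} = Fintype.card (Fin (b-a)) := by
    apply Fintype.card_congr
    refine ⟨fun j => ⟨j.1 - a, ?_⟩, fun i => ⟨⟨i + a, by omega⟩, ?_⟩, ?_, ?_⟩
    · have := (hS j.1).not.mp j.2
      omega
    · rw [hS]; simp only; omega
    · intro j
      have := (hS j.1).not.mp j.2
      ext; simp only; omega
    · intro j
      ext; simp
  simpa using this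

open scoped Classical in
lemma count_ext {n : ℕ} (S : Finset (Fin n)) (a b N : ℕ) (hab : a ≤ b) (hb : b ≤ n)
    (hS : ∀ j : Fin n, j ∈ S ↔ (j : ℕ) < a ∨ b ≤ (j : ℕ)) (hN : N = n + (b - a)) :
    (Finset.univ.filter fun ρ : Pos S ≃ Fin N =>
      StrictMono (fun j => ρ (Sum.inl j)) ∧ StrictMono (fun j => ρ (chain2 S j))).card
      ≤ (2 * (b - a)).choose (b - a) := by
  have hI : (Finset.univ.filter fun v : Fin N => a ≤ (v:ℕ) ∧ (v:ℕ) < a + 2 * (b-a)).card ≤ 2 * (b-a) := by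
    calc _ = ((Finset.univ.filter fun v : Fin N => a ≤ (v:ℕ) ∧ (v:ℕ) < a + 2 * (b-a)).map Fin.valEmbedding).card := by
          rw [Finset.card_map]
      _ ≤ (Finset.Ico a (a + 2*(b-a))).card := by
          apply Finset.card_le_card
          intro v hv
          simp only [Finset.mem_map, Finset.mem_filter] at hv
          obtain ⟨w, hw, rfl⟩ := hv
          simpa using hw.2
      _ = _ := by simp
  have hinr : ∀ ρ : Pos S ≃ Fin N, StrictMono (fun j => ρ (chain2 S j)) →
      StrictMono (fun j => ρ (Sum.inr j)) := by
    intro ρ h i j hij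
    have := h (show i.1 < j.1 from hij)
    simpa [chain2, i.2, j.2] using this
  calc _ ≤ (Finset.powersetCard (b-a) (Finset.univ.filter fun v : Fin N => a ≤ (v:ℕ) ∧ (v:ℕ) < a + 2 * (b-a))).card := by
        apply Finset.card_le_card_of_injOn (fun ρ => Finset.univ.image (fun j => ρ (Sum.inr j)))
        · intro ρ hρ
          simp only [Finset.coe_filter, Finset.mem_univ, true_and, Set.mem_ofPred_eq] at hρ
          simp only [Finset.mem_coe, Finset.mem_powersetCard]
          constructor
          · intro v hv
            simp only [Finset.mem_image, Finset.mem_univ, true_and] at hv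
            obtain ⟨j, rfl⟩ := hv
            have hj := (hS j.1).not.mp j.2
            simp only [Finset.mem_filter, Finset.mem_univ, true_and]
            have hcj : chain2 S j.1 = Sum.inr j := by simp [chain2, j.2]
            have hci : ∀ i, i ∈ S → chain2 S i = Sum.inl i := by intro i hi; simp [chain2, hi]
            constructor
            · -- a elements below
              have : (Finset.univ.map ⟨fun i : Fin a => ρ (Sum.inl ⟨i, by omega⟩), fun i i' h => by
                  simpa [Fin.ext_iff] using h⟩).card ≤ (Finset.Iio (ρ (Sum.inr j))).card := by
                apply Finset.card_le_card
                intro v hv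
                simp only [Finset.mem_map, Finset.mem_univ, true_and] at hv
                obtain ⟨i, rfl⟩ := hv
                have := hρ.2 (show (⟨i, by omega⟩ : Fin n) < j.1 by rw [Fin.lt_def]; simp only; omega)
                simp only [hcj] at this
                rw [hci _ ((hS _).mpr (Or.inl i.2))] at this
                exact Finset.mem_Iio.mpr this
              simpa using this
            · have : (Finset.univ.map ⟨fun i : Fin (n-b) => ρ (Sum.inl ⟨i + b, by omega⟩), fun i i' h => by
                  simpa [Fin.ext_iff] using h⟩).card ≤ (Finset.Ioi (ρ (Sum.inr j))).card := by
                apply Finset.card_le_card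
                intro v hv
                simp only [Finset.mem_map, Finset.mem_univ, true_and] at hv
                obtain ⟨i, rfl⟩ := hv
                have := hρ.2 (show j.1 < (⟨i + b, by omega⟩ : Fin n) by rw [Fin.lt_def]; simp only; omega)
                simp only [hcj] at this
                rw [hci _ ((hS _).mpr (Or.inr (by simp)))] at this
                exact Finset.mem_Ioi.mpr this
              rw [Finset.card_map, Fin.card_Ioi] at this
              simp only [Finset.card_univ, Fintype.card_fin] at this
              have := (ρ (Sum.inr j)).2
              omega
          · rw [Finset.card_image_of_injective _ (hinr ρ hρ.2).injective, Finset.card_univ,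
              card_compl S a b hab hb hS]
        · intro ρ hρ ρ' hρ' h
          simp only [Finset.coe_filter, Finset.mem_univ, true_and, Set.mem_ofPred_eq] at hρ hρ'
          have h1 : Set.range (fun j => ρ (Sum.inr j)) = Set.range (fun j => ρ' (Sum.inr j)) := by
            have := congrArg (fun s : Finset (Fin N) => (s : Set (Fin N))) h
            simpa using this
          have h2 : ∀ ρ : Pos S ≃ Fin N, Set.range (fun j => ρ (Sum.inl j)) = (Set.range (fun j => ρ (Sum.inr j)))ᶜ := by
            intro ρ
            ext v
            obtain ⟨p, rfl⟩ := ρ.surjective v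
            rcases p with p | p <;> simp
          have h3 : Set.range (fun j => ρ (Sum.inl j)) = Set.range (fun j => ρ' (Sum.inl j)) := by
            rw [h2, h2, h1]
          have h4 := (StrictMono.range_inj (hinr ρ hρ.2) (hinr ρ' hρ'.2)).mp h1
          have h5 := (StrictMono.range_inj hρ.1 hρ'.1).mp h3
          ext p
          rcases p with p | p
          · rw [congrFun h5 p]
          · rw [congrFun h4 p]
    _ ≤ _ := by
        rw [Finset.card_powersetCard]
        exact Nat.choose_le_choose _ hI

lemma pairProb_bound (n : ℕ) (σ σ' : Equiv.Perm (Fin n)) (a b : ℕ) (hab : a ≤ b) (hb : b ≤ n)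
    (hS : ∀ j : Fin n, j ∈ sharedSteps n σ σ' ↔ (j : ℕ) < a ∨ b ≤ (j : ℕ)) :
    pairProb n σ σ' ≤ ((2 * (b-a)).choose (b-a) : ℝ) / (n + (b-a)).factorial := by
  classical
  set S := sharedSteps n σ σ' with hSd
  have hcard : Fintype.card (Pos S) = n + (b - a) := by
    rw [Fintype.card_sum, card_compl S a b hab hb hS, Fintype.card_fin]
  let e : Pos S → EdgeIdx n := Sum.elim (pathEdge n σ) (fun j => pathEdge n σ' j.1)
  have hne : ∀ (i : Fin n) (j : {j : Fin n // j ∉ S}), pathEdge n σ i ≠ pathEdge n σ' j.1 := by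
    intro i j h
    have hij := pathEdge_level n σ σ' i j.1 h
    rw [hij] at h
    exact j.2 (Finset.mem_filter.mpr ⟨Finset.mem_univ _, h⟩)
  have he : Function.Injective e := by
    rintro (i | i) (j | j) h
    · exact congrArg _ (pathEdge_level n σ σ i j h)
    · exact absurd h (hne i j)
    · exact absurd h.symm (hne j i)
    · exact congrArg _ (Subtype.ext (pathEdge_level n σ' σ' i j h))
  have he2 : ∀ j, e (chain2 S j) = pathEdge n σ' j := by
    intro j
    by_cases h : j ∈ S
    · simp only [chain2, h, dite_true, e, Sum.elim_inl]
      rw [hSd, sharedSteps, Finset.mem_filter] at h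
      exact h.2
    · simp [chain2, h, e]
  let R : Set (Pos S → ℝ) := {x | StrictMono (fun j => x (Sum.inl j)) ∧ StrictMono (fun j => x (chain2 S j))}
  have hR : MeasurableSet R := by
    have hm : ∀ f : Fin n → Pos S, MeasurableSet {x : Pos S → ℝ | StrictMono (fun j => x (f j))} := by
      intro f
      have : {x : Pos S → ℝ | StrictMono (fun j => x (f j))} =
          ⋂ i, ⋂ j, ⋂ (_ : i < j), {x : Pos S → ℝ | x (f i) < x (f j)} := by
        ext x; simp [StrictMono]
      rw [this]
      exact MeasurableSet.iInter fun i => MeasurableSet.iInter fun j => MeasurableSet.iInter fun _ =>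
        measurableSet_lt (measurable_pi_apply _) (measurable_pi_apply _)
    exact (hm _).inter (hm _)
  have hset : {ω | Accessible n σ ω ∧ Accessible n σ' ω} = {ω : CubeOmega n | ω ∘ e ∈ R} := by
    ext ω
    simp only [R, Set.mem_ofPred_eq, Accessible, Function.comp_apply, he2]
    rfl
  have := prob_bound n e he R hR ((2 * (b-a)).choose (b-a)) (by
    intro x
    obtain ⟨r, hr⟩ := exists_rank x
    refine le_trans ?_ (count_ext S a b _ hab hb hS hcard)
    apply Finset.card_le_card_of_injOn (fun τ => τ.trans r)
    · intro τ hτ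
      simp only [Finset.coe_filter, Finset.mem_univ, true_and, Set.mem_ofPred_eq, R] at hτ ⊢
      exact ⟨fun i j hij => hr _ _ (hτ.1 hij), fun i j hij => hr _ _ (hτ.2 hij)⟩
    · intro τ _ τ' _ h
      ext p
      have := congrArg (fun f => f p) h
      simpa using this)
  unfold pairProb
  rw [hset, le_div_iff₀ (by positivity), mul_comm, ← hcard]
  exact this

lemma count_agree (n : ℕ) (σ : Equiv.Perm (Fin n)) (S : Finset (Fin n)) (m : ℕ)
    (hm : Fintype.card {j : Fin n // j ∉ S} = m) :
    (Finset.univ.filter fun σ' : Equiv.Perm (Fin n) => ∀ j ∈ S, σ' j = σ j).card ≤ m.factorial := by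
  classical
  rw [← hm, ← Fintype.card_perm, Fintype.card_congr (Equiv.Perm.subtypeEquivSubtypePerm (fun j => j ∉ S)),
    Fintype.card_subtype]
  apply Finset.card_le_card_of_injOn (fun σ' => Equiv.trans σ' σ.symm)
  · intro σ' h
    simp at h ⊢
    intro j hj
    rw [h j hj]; simp
  · intro τ _ τ' _ h
    ext p
    have := congrArg (fun f => σ (f p)) h
    simpa using congrArg Fin.val this

lemma c_bound (s m : ℕ) : c (s+m) s 1 ≤
    ((s+m).factorial : ℝ) * (s+1) * m.factorial * ((2*m).choose m) / (s+m+m).factorial := by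
  classical
  have hint : ∀ σ σ' : Equiv.Perm (Fin (s+m)), (sharedSteps (s+m) σ σ').card = s → numGaps (s+m) σ σ' = 1 →
      ∃ a ≤ s, ∀ j : Fin (s+m), j ∈ sharedSteps (s+m) σ σ' ↔ (j : ℕ) < a ∨ a + m ≤ (j : ℕ) := by
    intro σ σ' h1 h2
    obtain ⟨a, b, hab, hb, h⟩ := shared_interval _ σ σ' h2
    have hc := card_compl _ a b hab hb h
    have : Fintype.card {j // j ∉ sharedSteps (s+m) σ σ'} = (s+m) - s := by
      rw [Fintype.card_subtype_compl]; simp [h1]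
    refine ⟨a, by omega, ?_⟩
    rwa [show a + m = b by omega]
  unfold c
  calc _ ≤ ∑ p ∈ Finset.univ.filter
          (fun p : Equiv.Perm (Fin (s+m)) × Equiv.Perm (Fin (s+m)) =>
          (sharedSteps (s+m) p.1 p.2).card = s ∧ numGaps (s+m) p.1 p.2 = 1),
        ((2 * m).choose m : ℝ) / (s + m + m).factorial := by
        apply Finset.sum_le_sum
        rintro ⟨σ, σ'⟩ hp
        simp only [Finset.mem_filter, Finset.mem_univ, true_and] at hp
        obtain ⟨a, ha, h⟩ := hint σ σ' hp.1 hp.2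
        have := pairProb_bound (s+m) σ σ' a (a+m) (by omega) (by omega) h
        simpa using this
    _ = _ := by rw [Finset.sum_const, nsmul_eq_mul]
    _ ≤ (((s+m).factorial * ((s+1) * m.factorial) : ℕ) : ℝ) * (((2 * m).choose m : ℝ) / (s + m + m).factorial) := by
        gcongr
        let I : ℕ → Finset (Fin (s+m)) := fun a => Finset.univ.filter fun j => (j:ℕ) < a ∨ a + m ≤ (j:ℕ)
        let T : Equiv.Perm (Fin (s+m)) → Finset (Equiv.Perm (Fin (s+m))) := fun σ =>
          (Finset.range (s+1)).biUnion fun a => Finset.univ.filter fun σ' => ∀ j ∈ I a, σ' j = σ j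
        calc _ ≤ (Finset.univ.sigma T).card := by
              apply Finset.card_le_card_of_injOn (fun p => ⟨p.1, p.2⟩)
              · rintro ⟨σ, σ'⟩ hp
                simp only [Finset.coe_filter, Finset.mem_univ, true_and, Set.mem_ofPred_eq] at hp
                obtain ⟨a, ha, h⟩ := hint σ σ' hp.1 hp.2
                simp only [Finset.mem_coe, Finset.mem_sigma, Finset.mem_univ, true_and, T, Finset.mem_biUnion, Finset.mem_filter, Finset.mem_range]
                refine ⟨a, by omega, fun j hj => ?_⟩
                have := (h j).mpr (by simpa [I] using hj)
                rw [sharedSteps, Finset.mem_filter] at this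
                exact (congrArg Prod.snd this.2).symm
              · rintro ⟨σ, σ'⟩ _ ⟨τ, τ'⟩ _ h
                simpa using h
          _ = ∑ σ, (T σ).card := Finset.card_sigma _ _
          _ ≤ ∑ σ : Equiv.Perm (Fin (s+m)), ((s+1) * m.factorial) := by
              apply Finset.sum_le_sum
              intro σ _
              calc _ ≤ (Finset.range (s+1)).card * m.factorial := by
                    apply Finset.card_biUnion_le_card_mul
                    intro a ha
                    rw [Finset.mem_range] at ha
                    apply count_agree
                    have := card_compl (I a) a (a+m) (by omega) (by omega) (by intro j; simp [I])
                    rw [this]; omega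
                _ = _ := by simp
          _ = _ := by simp [Fintype.card_perm]
    _ = _ := by push_cast; ring

lemma c_nonneg' (n s g : ℕ) : 0 ≤ c n s g :=
  Finset.sum_nonneg fun _ _ => ENNReal.toReal_nonneg

end RandomHypercube
namespace RandomHypercube
lemma factA (m s : ℕ) (h : s ≤ m) :
    (s+m).factorial * (2*m).factorial * 3^s ≤ 2^s * (m.factorial * (s+2*m).factorial) := by
  induction s with
  | zero => simp
  | succ s ih =>
    have := ih (by omega)
    rw [show s+1+m = (s+m)+1 by ring, show s+1+2*m = (s+2*m)+1 by ring, Nat.factorial_succ, Nat.factorial_succ]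
    have h2 : (s+m+1)*3 ≤ 2 * (s+2*m+1) := by omega
    calc _ = ((s+m).factorial * (2*m).factorial * 3^s) * ((s+m+1)*3) := by ring
      _ ≤ (2^s * (m.factorial * (s+2*m).factorial)) * (2 * (s+2*m+1)) := Nat.mul_le_mul this h2
      _ = _ := by ring

lemma factB (m n j : ℕ) (h : 2*m ≤ n) (hj : j + 2 ≤ m) :
    (m+(j+2)).factorial * n.factorial * 3^j * ((n+1)*(n+2)) ≤
      2^j * ((m+1)*(m+2)) * (m.factorial * (n+(j+2)).factorial) := by
  induction j with
  | zero =>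
    simp only [Nat.factorial_succ, zero_add, ← add_assoc]
    apply le_of_eq; 
    show (m+1+1).factorial * _ * _ * _ = _ * _ * (_ * (n+1+1).factorial)
    simp only [Nat.factorial_succ]
    ring
  | succ j ih =>
    have := ih (by omega)
    rw [show m+(j+1+2) = (m+(j+2))+1 by ring, show n+(j+1+2) = (n+(j+2))+1 by ring, Nat.factorial_succ, Nat.factorial_succ]
    have h2 : (m+(j+2)+1)*3 ≤ 2 * (n+(j+2)+1) := by omega
    calc _ = ((m+(j+2)).factorial * n.factorial * 3^j * ((n+1)*(n+2))) * ((m+(j+2)+1)*3) := by ring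
      _ ≤ _ := Nat.mul_le_mul this h2
      _ = _ := by ring

noncomputable def fB (m : ℕ) : ℝ := (m+1)*(m+2)*(2/3)^(m-2)
noncomputable def fA (s : ℕ) : ℝ := (s+1)*(2/3)^s

lemma fA_nonneg (s : ℕ) : 0 ≤ fA s := by unfold fA; positivity
lemma fB_nonneg (s : ℕ) : 0 ≤ fB s := by unfold fB; positivity

lemma fA_summable : Summable fA := by
  have h1 := summable_pow_mul_geometric_of_norm_lt_one 1 (r := (2/3:ℝ)) (by norm_num)
  have h0 := summable_pow_mul_geometric_of_norm_lt_one 0 (r := (2/3:ℝ)) (by norm_num)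
  refine (h1.add h0).congr fun s => ?_
  unfold fA; ring

lemma fB_summable : Summable fB := by
  rw [← summable_nat_add_iff 2]
  have h2 := summable_pow_mul_geometric_of_norm_lt_one 2 (r := (2/3:ℝ)) (by norm_num)
  have h1 := (summable_pow_mul_geometric_of_norm_lt_one 1 (r := (2/3:ℝ)) (by norm_num)).mul_left 7
  have h0 := (summable_pow_mul_geometric_of_norm_lt_one 0 (r := (2/3:ℝ)) (by norm_num)).mul_left 12
  refine ((h2.add h1).add h0).congr fun s => ?_
  unfold fB; simp; ring

lemma term_bound (s m : ℕ) (hm : 2 ≤ m) :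
    ((s+m).factorial : ℝ) * (s+1) * m.factorial * ((2*m).choose m) / (s+m+m).factorial
      ≤ fA s + fB m / ((s+m : ℕ)+1) := by
  have hc : ((2*m).choose m : ℝ) * m.factorial * m.factorial = (2*m).factorial := by
    have := Nat.choose_mul_factorial_mul_factorial (show m ≤ 2*m by omega)
    rw [show 2*m-m = m by omega] at this
    exact_mod_cast this
  have hm0 : (0:ℝ) < m.factorial := by positivity
  have hN : (0:ℝ) < (s+m+m).factorial := by positivity
  have e1 : ((s+m).factorial : ℝ) * (s+1) * m.factorial * ((2*m).choose m) / (s+m+m).factorial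
      = (s+1) * (((s+m).factorial * (2*m).factorial) / (m.factorial * (s+m+m).factorial)) := by
    rw [← hc]; field_simp
  rw [e1]
  rcases le_total s m with h | h
  · have := factA m s h
    rw [show s + 2*m = s+m+m by ring] at this
    have h3 : (((s+m).factorial * (2*m).factorial) / (m.factorial * (s+m+m).factorial) : ℝ) ≤ (2/3)^s := by
      rw [div_pow, div_le_div_iff₀ (by positivity) (by positivity)]
      exact_mod_cast this
    have : (0:ℝ) ≤ fB m / ((s+m : ℕ)+1) := div_nonneg (fB_nonneg m) (by positivity)
    have h4 : ((s:ℝ)+1) * (((s+m).factorial * (2*m).factorial) / (m.factorial * (s+m+m).factorial) : ℝ) ≤ fA s := by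
      unfold fA; gcongr
    linarith
  · obtain ⟨j, rfl⟩ : ∃ j, m = j + 2 := ⟨m-2, by omega⟩
    have := factB (j+2) (s+(j+2)) j (by omega) le_rfl
    rw [show (j+2)+(j+2) = 2*(j+2) by ring] at this
    have h3 : (((s+(j+2)).factorial * (2*(j+2)).factorial) / ((j+2).factorial * (s+(j+2)+(j+2)).factorial) : ℝ)
        ≤ (((j+2:ℕ)+1)*((j+2:ℕ)+2) * 2^j) / (3^j * (((s+(j+2):ℕ)+1)*((s+(j+2):ℕ)+2))) := by
      rw [div_le_div_iff₀ (by positivity) (by positivity)]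
      have h5 : (((2*(j+2)).factorial * (s+(j+2)).factorial * 3^j * ((s+(j+2)+1)*(s+(j+2)+2)) : ℕ) : ℝ) ≤ ((2^j * ((j+2+1)*(j+2+2)) * ((j+2).factorial * (s+(j+2)+(j+2)).factorial) : ℕ) : ℝ) := by exact_mod_cast this
      push_cast at h5 ⊢
      linarith
    have h6 : ((s:ℝ)+1) * ((((j+2:ℕ)+1)*((j+2:ℕ)+2) * 2^j) / (3^j * (((s+(j+2):ℕ)+1)*((s+(j+2):ℕ)+2)))) ≤ fB (j+2) / ((s+(j+2) : ℕ)+1) := by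
      unfold fB
      rw [Nat.add_sub_cancel, div_pow]
      rw [mul_div_assoc', div_le_div_iff₀ (by positivity) (by positivity)]
      have h7 : (s:ℝ)+1 ≤ ((s+(j+2):ℕ):ℝ)+2 := by push_cast; linarith [(Nat.cast_nonneg j : (0:ℝ) ≤ j)]
      have : (((j+2:ℕ):ℝ)+1)*(((j+2:ℕ):ℝ)+2) * (2^j/3^j) * (3^j * ((((s+(j+2):ℕ):ℝ)+1)*(((s+(j+2):ℕ):ℝ)+2)))
        = (((s+(j+2):ℕ):ℝ)+2) * ((((j+2:ℕ):ℝ)+1)*(((j+2:ℕ):ℝ)+2) * 2^j) * (((s+(j+2):ℕ):ℝ)+1) := by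
        field_simp
      rw [this]
      gcongr
    have h8 := fA_nonneg s
    have h9 := mul_le_mul_of_nonneg_left h3 (show (0:ℝ) ≤ (s:ℝ)+1 by positivity)
    linarith

lemma final (k : ℕ → ℕ) (hk : Tendsto k atTop atTop) (c : ℕ → ℕ → ℝ) (hc0 : ∀ n s, 0 ≤ c n s)
    (hc : ∀ s m, 2 ≤ m → c (s+m) s ≤ fA s + fB m / ((s+m : ℕ)+1)) :
    Tendsto (fun n : ℕ => ∑ s ∈ Finset.Icc (k n) (n - 2), c n s) atTop (nhds 0) := by
  have hT : Tendsto (fun n : ℕ => (∑' s, fA (s + k n)) + (∑' m, fB m) / ((n:ℝ)+1)) atTop (nhds 0) := by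
    have h1 := (tendsto_sum_nat_add fA).comp hk
    have h2 : Tendsto (fun n : ℕ => (∑' m, fB m) / ((n:ℝ)+1)) atTop (nhds 0) := by
      apply Tendsto.div_atTop tendsto_const_nhds
      exact tendsto_atTop_add_const_right _ _ tendsto_natCast_atTop_atTop
    simpa using h1.add h2
  refine squeeze_zero' (Eventually.of_forall fun n => Finset.sum_nonneg fun s _ => hc0 n s) ?_ hT
  filter_upwards [eventually_ge_atTop 2] with n hn
  calc _ ≤ ∑ s ∈ Finset.Icc (k n) (n - 2), (fA s + fB (n-s) / ((n:ℝ)+1)) := by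
        apply Finset.sum_le_sum
        intro s hs
        rw [Finset.mem_Icc] at hs
        have := hc s (n-s) (by omega)
        rwa [show s + (n-s) = n by omega] at this
    _ = ∑ s ∈ Finset.Icc (k n) (n - 2), fA s + (∑ s ∈ Finset.Icc (k n) (n - 2), fB (n-s)) / ((n:ℝ)+1) := by
        rw [Finset.sum_add_distrib, Finset.sum_div]
    _ ≤ _ := by
        gcongr
        · have : ∑ s ∈ Finset.Icc (k n) (n - 2), fA s = ∑ t ∈ (Finset.Icc (k n) (n-2)).image (fun s => s - k n), fA (t + k n) := by
            rw [Finset.sum_image]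
            · apply Finset.sum_congr rfl
              intro s hs
              rw [Finset.mem_Icc] at hs
              rw [Nat.sub_add_cancel hs.1]
            · intro a ha b hb hab
              simp at ha hb hab; omega
          rw [this]
          exact Summable.sum_le_tsum _ (fun i _ => fA_nonneg _) ((summable_nat_add_iff (k n)).mpr fA_summable)
        · have : ∑ s ∈ Finset.Icc (k n) (n - 2), fB (n-s) = ∑ t ∈ (Finset.Icc (k n) (n-2)).image (fun s => n - s), fB t := by
            rw [Finset.sum_image]
            intro a ha b hb hab
            simp at ha hb hab; omega
          rw [this]
          exact Summable.sum_le_tsum _ (fun i _ => fB_nonneg _) fB_summable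
end RandomHypercube

open RandomHypercube in
/-- For any sequence `k(n) → ∞`, the pair sum over single-gap pairs sharing at least
`k(n)` edges vanishes as `n → ∞`. -/
theorem sum_c_one_gap_many_shared_tendsto_zero (k : ℕ → ℕ)
    (hk : Tendsto k atTop atTop) :
    Tendsto (fun n : ℕ => ∑ s ∈ Finset.Icc (k n) (n - 2), c n s 1)
      atTop (nhds 0) := by
  exact final k hk (fun n s => c n s 1) (fun n s => c_nonneg' n s 1)
    (fun s m hm => (c_bound s m).trans (term_bound s m hm))
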